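/- The 15×15 matrix M_W (given explicitly below), built from the six functions Ω⁴₁, Ω⁴₂, Ω⁵₁, Ω⁵₂, has determinant det(M_W) = 4·∏_{1≤i<j<k≤5} m_{ijk}, where m_{ijk} is the coefficient of dx¹∧dx²∧dx³ in Ωⁱ∧Ωʲ∧Ωᵏ for the 1-forms Ω¹ = dx¹−dx³, Ω² = dx²−dx³, Ω³ = dx³, Ω⁴ = Ω⁴₁dx¹+Ω⁴₂dx²−dx³, Ω⁵ = Ω⁵₁dx¹+Ω⁵₂dx²−dx³. In particular det(M_W) ≠ 0 at a point if and only if every triple of the five 1-forms is linearly independent there. -/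

import Mathlib

/-- Block elimination: if `D` is unipotent upper triangular and `D * C = C`, the determinant
reduces to the Schur complement `A - B * C`. -/
lemma det_block_aux (A : Matrix (Fin 6) (Fin 6) ℂ) (B : Matrix (Fin 6) (Fin 9) ℂ)
    (C : Matrix (Fin 9) (Fin 6) ℂ) (D : Matrix (Fin 9) (Fin 9) ℂ)
    (hDC : D * C = C) (hD : D.det = 1) :
    (Matrix.fromBlocks A B C D).det = (A - B * C).det := by
  have h1 : Matrix.fromBlocks A B C D * Matrix.fromBlocks 1 0 (-C) 1
      = Matrix.fromBlocks (A - B * C) B 0 D := by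
    rw [Matrix.fromBlocks_multiply]
    congr 1 <;> simp [hDC, sub_eq_add_neg]
  have h2 := congrArg Matrix.det h1
  rw [Matrix.det_mul, Matrix.det_fromBlocks_zero₁₂, Matrix.det_fromBlocks_zero₂₁, hD] at h2
  simpa using h2

/-- The bottom-left (after rotation) block. -/
def blkC : Matrix (Fin 9) (Fin 6) ℂ := Matrix.of
  ![![1, 0, 2, 0, 0, 0], ![0, 0, 0, 0, 1, 0], ![0, 0, 0, 0, 0, 0], ![0, 0, 0, 0, 0, 0],
    ![0, 0, 0, 1, 0, 0], ![0, 1, 0, 0, 0, 2], ![0, 0, 0, 0, 0, 0], ![0, 0, 0, 0, 0, 0],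
    ![0, 0, 0, 0, 0, 0]]

/-- The unipotent block. -/
def blkD : Matrix (Fin 9) (Fin 9) ℂ := Matrix.of
  ![![1, 0, 0, 0, 0, 0, 1, 0, 0], ![0, 1, 0, 0, 0, 0, 0, 1, 0], ![0, 0, 1, 0, 0, 0, 0, 0, 1],
    ![0, 0, 0, 1, 0, 0, 1, 0, 0], ![0, 0, 0, 0, 1, 0, 0, 1, 0], ![0, 0, 0, 0, 0, 1, 0, 0, 1],
    ![0, 0, 0, 0, 0, 0, 1, 0, 0], ![0, 0, 0, 0, 0, 0, 0, 1, 0], ![0, 0, 0, 0, 0, 0, 0, 0, 1]]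

lemma blkD_det : blkD.det = 1 := by
  rw [Matrix.det_of_isUpperTriangular]
  · simp [Fin.prod_univ_succ, blkD]
  · intro i j hij
    fin_cases i <;> fin_cases j <;> first | rfl | (exfalso; revert hij; simp)

lemma blkD_mul : blkD * blkC = blkC := by
  ext i j
  rw [Matrix.mul_apply]
  fin_cases i <;> fin_cases j <;> simp [blkD, blkC, Fin.sum_univ_succ]

/-- The nontrivial rows, columns 1 to 6. -/
def blkA (a b c d : ℂ) : Matrix (Fin 6) (Fin 6) ℂ := Matrix.of
  ![![a ^ 3, a ^ 2 * b, 2 * a ^ 2, 2 * a * b, 0, 0],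
    ![a ^ 2 * b, a * b ^ 2, a * b, b ^ 2, a ^ 2, a * b],
    ![a * b ^ 2, b ^ 3, 0, 0, 2 * a * b, 2 * b ^ 2],
    ![c ^ 3, c ^ 2 * d, 2 * c ^ 2, 2 * c * d, 0, 0],
    ![c ^ 2 * d, c * d ^ 2, c * d, d ^ 2, c ^ 2, c * d],
    ![c * d ^ 2, d ^ 3, 0, 0, 2 * c * d, 2 * d ^ 2]]

/-- The nontrivial rows, columns 7 to 15. -/
def blkB (a b c d : ℂ) : Matrix (Fin 6) (Fin 9) ℂ := Matrix.of
  ![![a, 0, 0, b, 0, 0, 1, 0, 0], ![0, a, 0, 0, b, 0, 0, 1, 0], ![0, 0, a, 0, 0, b, 0, 0, 1],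
    ![c, 0, 0, d, 0, 0, 1, 0, 0], ![0, c, 0, 0, d, 0, 0, 1, 0], ![0, 0, c, 0, 0, d, 0, 0, 1]]

/-- The Schur complement. -/
def schur (a b c d : ℂ) : Matrix (Fin 6) (Fin 6) ℂ := Matrix.of
  ![![a ^ 3 - a, a ^ 2 * b, 2 * a ^ 2 - 2 * a, 2 * a * b, 0, 0],
    ![a ^ 2 * b, a * b ^ 2, a * b, b ^ 2 - b, a ^ 2 - a, a * b],
    ![a * b ^ 2, b ^ 3 - b, 0, 0, 2 * a * b, 2 * b ^ 2 - 2 * b],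
    ![c ^ 3 - c, c ^ 2 * d, 2 * c ^ 2 - 2 * c, 2 * c * d, 0, 0],
    ![c ^ 2 * d, c * d ^ 2, c * d, d ^ 2 - d, c ^ 2 - c, c * d],
    ![c * d ^ 2, d ^ 3 - d, 0, 0, 2 * c * d, 2 * d ^ 2 - 2 * d]]

lemma schur_eq (a b c d : ℂ) : blkA a b c d - blkB a b c d * blkC = schur a b c d := by
  ext i j
  rw [Matrix.sub_apply, Matrix.mul_apply]
  fin_cases i <;> fin_cases j <;> simp [blkA, blkB, blkC, schur, Fin.sum_univ_succ] <;> ring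

set_option maxHeartbeats 4000000 in
lemma schur_det (a b c d : ℂ) : (schur a b c d).det =
    4 * ((-1 + b + a) * (-1 + d + c) * b * d * (-b + d + -(a * d) + b * c) * a * c *
      (a + -c + -(a * d) + b * c) * (a * d - b * c)) := by
  simp [schur, Matrix.det_succ_row_zero, Fin.sum_univ_succ, Fin.succAbove]
  ring

lemma prod_triples (m : Fin 5 → Fin 5 → Fin 5 → ℂ) :
    (∏ i : Fin 5, ∏ j ∈ Finset.Ioi i, ∏ k ∈ Finset.Ioi j, m i j k) =
      m 0 1 2 * m 0 1 3 * m 0 1 4 * m 0 2 3 * m 0 2 4 * m 0 3 4 * m 1 2 3 * m 1 2 4 *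
        m 1 3 4 * m 2 3 4 := by
  have e0 : Finset.Ioi (0 : Fin 5) = {1, 2, 3, 4} := by decide
  have e1 : Finset.Ioi (1 : Fin 5) = {2, 3, 4} := by decide
  have e2 : Finset.Ioi (2 : Fin 5) = {3, 4} := by decide
  have e3 : Finset.Ioi (3 : Fin 5) = {4} := by decide
  have e4 : Finset.Ioi (4 : Fin 5) = ∅ := by decide
  rw [Fin.prod_univ_five, e0, e1, e2, e3, e4]
  repeat rw [Finset.prod_insert (by decide)]
  simp only [Finset.prod_singleton, Finset.prod_empty, e1, e2, e3, e4]
  repeat rw [Finset.prod_insert (by decide)]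
  simp only [Finset.prod_singleton]
  ring

/-- The order in which the rows are listed. -/
def rowOrd : Fin 6 ⊕ Fin 9 → Fin 15 :=
  Sum.elim ![9, 10, 11, 12, 13, 14] ![0, 1, 2, 3, 4, 5, 6, 7, 8]

/-- The order in which the columns are listed. -/
def colOrd : Fin 6 ⊕ Fin 9 → Fin 15 :=
  Sum.elim ![0, 1, 2, 3, 4, 5] ![6, 7, 8, 9, 10, 11, 12, 13, 14]

lemma det_rotate (M : Matrix (Fin 15) (Fin 15) ℂ) :
    M.det = (M.submatrix rowOrd colOrd).det := by
  have h := Matrix.det_permute (finRotate 15 ^ 9) M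
  have hs : Equiv.Perm.sign (finRotate 15 ^ 9) = 1 := by
    rw [map_pow, sign_finRotate]; decide
  rw [hs] at h
  rw [← Matrix.det_submatrix_equiv_self (finSumFinEquiv (m := 6) (n := 9))] at h
  have hc : colOrd = finSumFinEquiv (m := 6) (n := 9) := by
    funext i
    revert i
    decide
  have hr : rowOrd = (⇑(finRotate 15 ^ 9 : Equiv.Perm (Fin 15))) ∘ finSumFinEquiv (m := 6) (n := 9) := by
    funext i
    revert i
    decide
  rw [hr, hc]
  simpa using h.symm

set_option maxHeartbeats 4000000 in
/-- The determinant of the 15×15 matrix `M_W` of the linear system characterizing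
projective connections compatible with a planar-normalized 5-web in `ℂ³` equals
`4·∏_{i<j<k} m_{ijk}`, where `m_{ijk}` is the coefficient of `dx¹∧dx²∧dx³` in
`Ωⁱ∧Ωʲ∧Ωᵏ`. In particular `det M_W ≠ 0` iff every triple of the five 1-forms is
linearly independent. -/
theorem stmt_10 (a b c d : ℂ)
    (Ω : Fin 5 → Fin 3 → ℂ)
    (hΩ : Ω = ![![1, 0, -1], ![0, 1, -1], ![0, 0, 1], ![a, b, -1], ![c, d, -1]])
    (m : Fin 5 → Fin 5 → Fin 5 → ℂ)
    (hm : ∀ i j k, m i j k = Matrix.det (Matrix.of ![Ω i, Ω j, Ω k]))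
    (M : Matrix (Fin 15) (Fin 15) ℂ)
    (hM : M = Matrix.of
      ![![1, 0, 2, 0, 0, 0, 1, 0, 0, 0, 0, 0, 1, 0, 0],
        ![0, 0, 0, 0, 1, 0, 0, 1, 0, 0, 0, 0, 0, 1, 0],
        ![0, 0, 0, 0, 0, 0, 0, 0, 1, 0, 0, 0, 0, 0, 1],
        ![0, 0, 0, 0, 0, 0, 0, 0, 0, 1, 0, 0, 1, 0, 0],
        ![0, 0, 0, 1, 0, 0, 0, 0, 0, 0, 1, 0, 0, 1, 0],
        ![0, 1, 0, 0, 0, 2, 0, 0, 0, 0, 0, 1, 0, 0, 1],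
        ![0, 0, 0, 0, 0, 0, 0, 0, 0, 0, 0, 0, 1, 0, 0],
        ![0, 0, 0, 0, 0, 0, 0, 0, 0, 0, 0, 0, 0, 1, 0],
        ![0, 0, 0, 0, 0, 0, 0, 0, 0, 0, 0, 0, 0, 0, 1],
        ![a ^ 3, a ^ 2 * b, 2 * a ^ 2, 2 * a * b, 0, 0, a, 0, 0, b, 0, 0, 1, 0, 0],
        ![a ^ 2 * b, a * b ^ 2, a * b, b ^ 2, a ^ 2, a * b, 0, a, 0, 0, b, 0, 0, 1, 0],
        ![a * b ^ 2, b ^ 3, 0, 0, 2 * a * b, 2 * b ^ 2, 0, 0, a, 0, 0, b, 0, 0, 1],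
        ![c ^ 3, c ^ 2 * d, 2 * c ^ 2, 2 * c * d, 0, 0, c, 0, 0, d, 0, 0, 1, 0, 0],
        ![c ^ 2 * d, c * d ^ 2, c * d, d ^ 2, c ^ 2, c * d, 0, c, 0, 0, d, 0, 0, 1, 0],
        ![c * d ^ 2, d ^ 3, 0, 0, 2 * c * d, 2 * d ^ 2, 0, 0, c, 0, 0, d, 0, 0, 1]]) :
    (M.det = 4 * ∏ i : Fin 5, ∏ j ∈ Finset.Ioi i, ∏ k ∈ Finset.Ioi j, m i j k) ∧
    (M.det ≠ 0 ↔ ∀ i j k : Fin 5, i < j → j < k → m i j k ≠ 0) := by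
  have hdet : M.det = 4 * ∏ i : Fin 5, ∏ j ∈ Finset.Ioi i, ∏ k ∈ Finset.Ioi j, m i j k := by
    have hblk : M.submatrix rowOrd colOrd
        = Matrix.fromBlocks (blkA a b c d) (blkB a b c d) blkC blkD := by
      clear hm hΩ
      subst hM
      ext i j
      rcases i with i | i <;> rcases j with j | j <;> fin_cases i <;> fin_cases j <;>
        simp [rowOrd, colOrd, blkA, blkB, blkC, blkD]
    rw [det_rotate, hblk, det_block_aux _ _ _ _ blkD_mul blkD_det, schur_eq, schur_det,
      prod_triples]
    simp only [hm, hΩ]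
    simp [Matrix.det_fin_three]
  refine ⟨hdet, ?_⟩
  rw [hdet]
  clear hdet hM hm hΩ
  simp only [ne_eq, mul_eq_zero, OfNat.ofNat_ne_zero, false_or, Finset.prod_eq_zero_iff,
    Finset.mem_univ, Finset.mem_Ioi, true_and, not_exists, not_and]
  exact ⟨fun h i j k hij hjk => h i j hij k hjk, fun h i j hij k hjk => h i j k hij hjk⟩
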